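/- Let G be a finite simple graph that is quasi-convex, i.e., any two distinct simple cycles of G share at most one edge, and let C be the set of all simple cycles of G. Then for every edge e = {u,v} of G, AF(e) = F(e) + Σ_{n≥3} (6 − n)·c_n(e), where c_n(e) denotes the number of simple cycles of length n in G containing e and F(e) = 4 − deg(u) − deg(v) is the Forman–Ricci curvature of e. -/

import Mathlib

/-!
Fix `e = s(u, v)`. For `e' ≠ e`, whichever of the two edges is smaller, one of `Γ e e'` and
`Γ e' e` counts the cycles in which the edges are aligned and the other counts the cycles through
both in which they are not, so their sum is the number `N e'` of cycles through both edges
(`Gamma_add_Gamma`). Two cycles through both `e` and `e'` would share two edges, so quasi-convexity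
gives `N e' ≤ 1`. Consequently one of the two entries vanishes, and
`|Γ e e' + Γ e' e - 1| = 1 - N e'`, `|Γ e e' - Γ e' e| = N e'`.

There are `deg u + deg v - 2` edges adjacent to `e` (`card_sharing_add_two`), so they contribute
`4 - deg u - deg v` together with the leading `2`. Exchanging the order of summation, it remains
to sum over the cycles `γ` through `e`: a cycle with `n` edges contributes `1` through `Γ e e`,
`2` through its two edges adjacent to `e` (`card_sharing_cycle`), and `-(n - 3)` through its
remaining edges, hence `6 - n` in total.
-/

open scoped Classical

open SimpleGraph Finset

variable {V : Type*}

/-- The walk `w` traverses the ordered pair of vertices `(a, b)` as one of its steps. -/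
def TraversesPair {G : SimpleGraph V} {x y : V} (w : G.Walk x y) (a b : V) : Prop :=
  (a, b) ∈ w.darts.map SimpleGraph.Dart.toProd

/-- The edge `e` is traversed by `w` from its smaller to its larger endpoint,
with respect to the linear order `o` on the vertices. -/
def TraversedUp (o : LinearOrder V) {G : SimpleGraph V} {x y : V} (w : G.Walk x y)
    (e : Sym2 V) : Prop :=
  ∃ a b : V, o.lt a b ∧ e = s(a, b) ∧ TraversesPair w a b

/-- The edge `e` is traversed by `w` from its larger to its smaller endpoint,
with respect to the linear order `o` on the vertices. -/
def TraversedDown (o : LinearOrder V) {G : SimpleGraph V} {x y : V} (w : G.Walk x y)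
    (e : Sym2 V) : Prop :=
  ∃ a b : V, o.lt a b ∧ e = s(a, b) ∧ TraversesPair w b a

/-- Two edges are aligned in the (oriented) closed walk `w` if both are traversed from
smaller to larger endpoint, or both from larger to smaller endpoint. -/
def AlignedIn (o : LinearOrder V) {G : SimpleGraph V} {x y : V} (w : G.Walk x y)
    (e e' : Sym2 V) : Prop :=
  (TraversedUp o w e ∧ TraversedUp o w e') ∨ (TraversedDown o w e ∧ TraversedDown o w e')

/-- `γ` is the edge set of a simple cycle of `G`.  A simple cycle, identified up to rotation
and reflection, is determined by its edge set. -/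
def IsCycleEdgeSet [DecidableEq V] (G : SimpleGraph V) (γ : Finset (Sym2 V)) : Prop :=
  ∃ (x : V) (w : G.Walk x x), w.IsCycle ∧ w.edges.toFinset = γ

/-- Edges `e` and `e'` are aligned in the simple cycle with edge set `γ`, i.e. aligned with
respect to some (equivalently, any) cyclic orientation of that cycle. -/
def AlignedInCycle (o : LinearOrder V) [DecidableEq V] (G : SimpleGraph V)
    (γ : Finset (Sym2 V)) (e e' : Sym2 V) : Prop :=
  ∃ (x : V) (w : G.Walk x x), w.IsCycle ∧ w.edges.toFinset = γ ∧ AlignedIn o w e e'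

/-- The smaller endpoint of an edge, with respect to the linear order `o`. -/
def emin (o : LinearOrder V) (e : Sym2 V) : V :=
  letI := o
  Sym2.lift ⟨fun a b => min a b, fun a b => min_comm a b⟩ e

/-- The larger endpoint of an edge, with respect to the linear order `o`. -/
def emax (o : LinearOrder V) (e : Sym2 V) : V :=
  letI := o
  Sym2.lift ⟨fun a b => max a b, fun a b => max_comm a b⟩ e

/-- The lexicographic order on edges induced by the linear order `o` on vertices. -/
def edgeLT (o : LinearOrder V) (e e' : Sym2 V) : Prop :=
  o.lt (emin o e) (emin o e') ∨ (emin o e = emin o e' ∧ o.lt (emax o e) (emax o e'))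

/-- The cycle-count matrix `Γ` associated with a set `C` of simple cycles (given by their edge
sets): `Γ e e` is the number of cycles in `C` containing `e`; for `e ≠ e'`, `Γ e e'` is the
number of cycles of `C` in which `e, e'` are aligned if `e < e'`, and the number of cycles of
`C` containing both in which they are not aligned if `e > e'`. -/
noncomputable def Gamma (o : LinearOrder V) [DecidableEq V] (G : SimpleGraph V)
    (C : Finset (Finset (Sym2 V))) (e e' : Sym2 V) : ℕ :=
  if e = e' then {γ ∈ (C : Set (Finset (Sym2 V))) | e ∈ γ}.ncard
  else if edgeLT o e e' then
    {γ ∈ (C : Set (Finset (Sym2 V))) | AlignedInCycle o G γ e e'}.ncard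
  else
    {γ ∈ (C : Set (Finset (Sym2 V))) | e ∈ γ ∧ e' ∈ γ ∧ ¬ AlignedInCycle o G γ e e'}.ncard

/-- Two edges share a vertex. -/
def ShareVertex (e e' : Sym2 V) : Prop :=
  ∃ v, v ∈ e ∧ v ∈ e'

/-- The augmented Forman–Ricci curvature of the edge `e` with respect to the set `C` of
simple cycles (given by their edge sets), and the linear order `o` on the vertices. -/
noncomputable def AF (o : LinearOrder V) [Fintype V] [DecidableEq V] (G : SimpleGraph V)
    (C : Finset (Finset (Sym2 V))) (e : Sym2 V) : ℤ :=
  2 + (Gamma o G C e e : ℤ)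
    - ∑ e' ∈ G.edgeFinset.filter (fun e' => e' ≠ e ∧ ShareVertex e e'),
        |(Gamma o G C e e' : ℤ) + (Gamma o G C e' e : ℤ) - 1|
    - ∑ e' ∈ G.edgeFinset.filter (fun e' => e' ≠ e ∧ ¬ ShareVertex e e'),
        |(Gamma o G C e e' : ℤ) - (Gamma o G C e' e : ℤ)|

/-- The set of all simple cycles of `G`, given by their edge sets. -/
noncomputable def allCycles [Fintype V] [DecidableEq V] (G : SimpleGraph V) :
    Finset (Finset (Sym2 V)) :=
  Set.toFinset {γ : Finset (Sym2 V) | IsCycleEdgeSet G γ}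

/-- An edge `s(u, v)` of `H` shares a vertex with `deg u + deg v - 2` other edges of `H`: the
incidence sets of `u` and `v` meet exactly in `s(u, v)`. -/
lemma card_sharing_add_two [Fintype V] [DecidableEq V] (H : SimpleGraph V) {u v : V}
    (h : H.Adj u v) :
    (H.edgeFinset.filter (fun e' => e' ≠ s(u, v) ∧ ShareVertex s(u, v) e')).card + 2
      = H.degree u + H.degree v := by
  have h1 : H.edgeFinset.filter (fun e' => e' ≠ s(u, v) ∧ ShareVertex s(u, v) e')
      = (H.incidenceFinset u ∪ H.incidenceFinset v).erase s(u, v) := by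
    ext e'
    simp only [ShareVertex, mem_filter, mem_edgeFinset, mem_erase, mem_union,
      mem_incidenceFinset, incidenceSet, Set.mem_ofPred_eq, Sym2.mem_iff]
    constructor
    · rintro ⟨he, hne, w, rfl | rfl, hw⟩ <;> tauto
    · rintro ⟨hne, ⟨he, hw⟩ | ⟨he, hw⟩⟩
      · exact ⟨he, hne, u, Or.inl rfl, hw⟩
      · exact ⟨he, hne, v, Or.inr rfl, hw⟩
  have h2 : H.incidenceFinset u ∩ H.incidenceFinset v = {s(u, v)} := by
    ext e'
    have := Set.ext_iff.1 (H.incidenceSet_inter_incidenceSet_of_adj h) e'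
    simpa using this
  have hmem : s(u, v) ∈ H.incidenceFinset u ∪ H.incidenceFinset v := by
    have : s(u, v) ∈ H.incidenceFinset u ∩ H.incidenceFinset v := by simp [h2]
    exact mem_union_left _ (mem_inter.1 this).1
  have h3 := Finset.card_union_add_card_inter (H.incidenceFinset u) (H.incidenceFinset v)
  rw [h2, card_singleton, card_incidenceFinset_eq_degree, card_incidenceFinset_eq_degree] at h3
  rw [h1]
  have := Finset.card_erase_add_one hmem
  lia

/-- In a simple cycle through `s(u, v)` exactly two further edges share a vertex with `s(u, v)`,
since every vertex of the cycle has degree two in it. -/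
lemma card_sharing_cycle [Fintype V] [DecidableEq V] {G : SimpleGraph V}
    {γ : Finset (Sym2 V)} (hγ : IsCycleEdgeSet G γ) {u v : V} (h : s(u, v) ∈ γ) :
    (γ.filter (fun e' => e' ≠ s(u, v) ∧ ShareVertex s(u, v) e')).card = 2 := by
  obtain ⟨x, w, hw, rfl⟩ := hγ
  have h' : s(u, v) ∈ w.edges := by simpa using h
  have hadj : w.toSubgraph.spanningCoe.Adj u v := by
    simpa [← Subgraph.mem_edgeSet] using h'
  have hdeg : ∀ y ∈ w.support, w.toSubgraph.spanningCoe.degree y = 2 := by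
    intro y hy
    rw [← hw.ncard_neighborSet_toSubgraph_eq_two hy, ← card_neighborSet_eq_degree,
      ← Nat.card_eq_fintype_card]
    rfl
  have hE : w.toSubgraph.spanningCoe.edgeFinset = w.edges.toFinset := by
    ext e'
    induction e' with | _ a b =>
    simp
  have key := card_sharing_add_two _ hadj
  rw [hdeg u (w.fst_mem_support_of_mem_edges h'), hdeg v (w.snd_mem_support_of_mem_edges h'),
    hE] at key
  lia

lemma IsCycleEdgeSet.card_mem_Icc [Fintype V] [DecidableEq V] {G : SimpleGraph V}
    {γ : Finset (Sym2 V)} (hγ : IsCycleEdgeSet G γ) :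
    γ.card ∈ Finset.Icc 3 (Fintype.card V) := by
  obtain ⟨x, w, hw, rfl⟩ := hγ
  rw [List.toFinset_card_of_nodup hw.edges_nodup, Walk.length_edges, Finset.mem_Icc]
  refine ⟨hw.three_le_length, ?_⟩
  have := hw.support_nodup.length_le_card
  simpa using this

lemma IsCycleEdgeSet.subset_edgeFinset [Fintype V] [DecidableEq V] {G : SimpleGraph V}
    {γ : Finset (Sym2 V)} (hγ : IsCycleEdgeSet G γ) : γ ⊆ G.edgeFinset := by
  obtain ⟨x, w, hw, rfl⟩ := hγ
  intro e he
  simpa using w.edges_subset_edgeSet (by simpa using he)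

lemma TraversesPair.mem_edges {G : SimpleGraph V} {x y : V} {w : G.Walk x y} {a b : V}
    (h : TraversesPair w a b) : s(a, b) ∈ w.edges := by
  obtain ⟨d, hd, h⟩ := List.mem_map.1 h
  refine List.mem_map.2 ⟨d, hd, ?_⟩
  rw [Dart.edge, h]

lemma AlignedInCycle.mem (o : LinearOrder V) [DecidableEq V] {G : SimpleGraph V}
    {γ : Finset (Sym2 V)} {e e' : Sym2 V} (h : AlignedInCycle o G γ e e') : e ∈ γ ∧ e' ∈ γ := by
  obtain ⟨x, w, hw, rfl, h⟩ := h
  simp only [List.mem_toFinset]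
  rcases h with ⟨⟨a, b, -, rfl, h1⟩, ⟨c, d, -, rfl, h2⟩⟩ | ⟨⟨a, b, -, rfl, h1⟩, ⟨c, d, -, rfl, h2⟩⟩
  · exact ⟨h1.mem_edges, h2.mem_edges⟩
  · rw [Sym2.eq_swap (a := a), Sym2.eq_swap (a := c)]
    exact ⟨h1.mem_edges, h2.mem_edges⟩

lemma alignedInCycle_comm (o : LinearOrder V) [DecidableEq V] (G : SimpleGraph V)
    (γ : Finset (Sym2 V)) (e e' : Sym2 V) :
    AlignedInCycle o G γ e e' ↔ AlignedInCycle o G γ e' e := by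
  simp only [AlignedInCycle, AlignedIn, and_comm]

lemma edgeLT_asymm (o : LinearOrder V) {e e' : Sym2 V} (h : edgeLT o e e') :
    ¬ edgeLT o e' e := by
  let := o
  rintro (h' | ⟨h1, h'⟩) <;> rcases h with h | ⟨h2, h⟩
  · exact lt_asymm h h'
  · exact h'.ne h2.symm
  · exact h.ne h1.symm
  · exact lt_asymm h h'

lemma edgeLT_total (o : LinearOrder V) {e e' : Sym2 V} (hne : e ≠ e') :
    edgeLT o e e' ∨ edgeLT o e' e := by
  let := o
  by_contra hcon
  simp only [edgeLT, not_or, not_and] at hcon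
  obtain ⟨⟨h1, h2⟩, h3, h4⟩ := hcon
  have hmin : emin o e = emin o e' := le_antisymm (not_lt.1 h3) (not_lt.1 h1)
  have hmax : emax o e = emax o e' :=
    le_antisymm (not_lt.1 (h4 hmin.symm)) (not_lt.1 (h2 hmin))
  apply hne
  -- an edge is recovered from its smaller and larger endpoints
  have key : ∀ f : Sym2 V, s(emin o f, emax o f) = f := by
    intro f
    induction f with | _ a b =>
    change s(min a b, max a b) = s(a, b)
    rcases le_total a b with h | h
    · rw [min_eq_left h, max_eq_right h]
    · rw [min_eq_right h, max_eq_left h, Sym2.eq_swap]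
  rw [← key e, ← key e', hmin, hmax]

/-- Off the diagonal, the two entries of `Γ` at a pair of edges add up to the number of cycles
through both: one counts the aligned, the other the non-aligned cycles. -/
lemma Gamma_add_Gamma (o : LinearOrder V) [DecidableEq V] (G : SimpleGraph V)
    (C : Finset (Finset (Sym2 V))) {e e' : Sym2 V} (hne : e ≠ e') :
    Gamma o G C e e' + Gamma o G C e' e
      = ((C.filter (e ∈ ·)).filter (e' ∈ ·)).card := by
  wlog hlt : edgeLT o e e' generalizing e e'
  · rw [add_comm, this hne.symm ((edgeLT_total o hne).resolve_left hlt), filter_comm]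
  rw [Gamma, if_neg hne, if_pos hlt, Gamma, if_neg hne.symm, if_neg (edgeLT_asymm o hlt),
    ← Set.ncard_union_eq _ (C.finite_toSet.subset fun _ h => h.1)
      (C.finite_toSet.subset fun _ h => h.1), ← Set.ncard_coe_finset]
  · congr 1
    ext γ
    have hm := AlignedInCycle.mem o (G := G) (γ := γ) (e := e) (e' := e')
    have hc := alignedInCycle_comm o G γ e e'
    simp only [Set.mem_union, Set.mem_ofPred_eq, coe_filter, mem_filter, mem_coe]
    tauto
  · rw [Set.disjoint_left]
    rintro γ ⟨-, h⟩ ⟨-, -, -, h'⟩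
    exact h' ((alignedInCycle_comm o G γ _ _).1 h)

/-- Let `G` be a finite simple graph that is quasi-convex, i.e. any two
distinct simple cycles of `G` share at most one edge, and let `C` be the set of all simple
cycles of `G`.  Then for every edge `e = {u, v}` of `G`,
`AF e = F e + Σ_{n ≥ 3} (6 - n) ⬝ cₙ e`, where `cₙ e` is the number of simple cycles of
length `n` of `G` containing `e` and `F e = 4 - deg u - deg v` is the Forman–Ricci curvature
(every simple cycle has length between `3` and the number of vertices, so the sum over
`n ∈ [3, |V|]` accounts for all the terms `n ≥ 3`). -/
theorem stmt10 {V : Type*} [Fintype V] [DecidableEq V] (o : LinearOrder V)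
    (G : SimpleGraph V)
    (hqc : ∀ γ₁ γ₂ : Finset (Sym2 V), IsCycleEdgeSet G γ₁ → IsCycleEdgeSet G γ₂ →
      γ₁ ≠ γ₂ → (γ₁ ∩ γ₂).card ≤ 1)
    {u v : V} (huv : G.Adj u v) :
    AF o G (allCycles G) s(u, v)
      = 4 - (G.degree u : ℤ) - (G.degree v : ℤ)
        + ∑ n ∈ Finset.Icc 3 (Fintype.card V), (6 - (n : ℤ)) *
            (({γ : Finset (Sym2 V) | IsCycleEdgeSet G γ ∧ γ.card = n ∧ s(u, v) ∈ γ}.ncard : ℤ)) := by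
  have hAdeg := card_sharing_add_two G huv
  unfold AF
  set e : Sym2 V := s(u, v) with he
  set S := (allCycles G).filter (e ∈ ·) with hS
  have memS : ∀ γ, γ ∈ S ↔ IsCycleEdgeSet G γ ∧ e ∈ γ := by
    intro γ
    simp [hS, allCycles]
  -- the number of cycles through both `e` and `e'`
  let N : Sym2 V → ℕ := fun e' => (S.filter (e' ∈ ·)).card
  set A := G.edgeFinset.filter (fun e' => e' ≠ e ∧ ShareVertex e e') with hA
  set B := G.edgeFinset.filter (fun e' => e' ≠ e ∧ ¬ ShareVertex e e') with hB
  have hN1 : ∀ e', e' ≠ e → N e' ≤ 1 := by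
    intro e' hne
    refine Finset.card_le_one.2 fun γ₁ h1 γ₂ h2 => ?_
    obtain ⟨h1, h1'⟩ := mem_filter.1 h1
    obtain ⟨h2, h2'⟩ := mem_filter.1 h2
    by_contra hγ
    have h := Finset.card_le_one.1
      (hqc γ₁ γ₂ ((memS _).1 h1).1 ((memS _).1 h2).1 hγ) e
      (mem_inter.2 ⟨((memS _).1 h1).2, ((memS _).1 h2).2⟩) e' (mem_inter.2 ⟨h1', h2'⟩)
    exact hne h.symm
  have hΓ : ∀ e', e' ≠ e →
      Gamma o G (allCycles G) e e' + Gamma o G (allCycles G) e' e = N e' :=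
    fun e' hne => Gamma_add_Gamma o G _ hne.symm
  have hsumA : ∑ e' ∈ A, |(Gamma o G (allCycles G) e e' : ℤ)
      + (Gamma o G (allCycles G) e' e : ℤ) - 1| = ∑ e' ∈ A, (1 - (N e' : ℤ)) := by
    refine Finset.sum_congr rfl fun e' he' => ?_
    have hne := (mem_filter.1 he').2.1
    have h1 := hN1 e' hne
    have h2 := hΓ e' hne
    rw [abs_of_nonpos (by lia)]
    lia
  have hsumB : ∑ e' ∈ B, |(Gamma o G (allCycles G) e e' : ℤ)
      - (Gamma o G (allCycles G) e' e : ℤ)| = ∑ e' ∈ B, (N e' : ℤ) := by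
    refine Finset.sum_congr rfl fun e' he' => ?_
    have hne := (mem_filter.1 he').2.1
    have h1 := hN1 e' hne
    have h2 := hΓ e' hne
    rcases abs_cases ((Gamma o G (allCycles G) e e' : ℤ)
      - (Gamma o G (allCycles G) e' e : ℤ)) with h | h <;> lia
  have hdouble : ∀ T : Finset (Sym2 V),
      ∑ e' ∈ T, (N e' : ℤ) = ∑ γ ∈ S, ((T.filter (· ∈ γ)).card : ℤ) := by
    intro T
    exact_mod_cast Finset.sum_card_bipartiteAbove_eq_sum_card_bipartiteBelow
      (s := T) (t := S) (fun e' γ => e' ∈ γ)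
  have hcardA : ∀ γ ∈ S, (A.filter (· ∈ γ)).card = 2 := by
    intro γ hγ
    obtain ⟨hc, hm⟩ := (memS γ).1 hγ
    rw [← card_sharing_cycle hc hm]
    congr 1
    ext e'
    have : e' ∈ γ → e' ∈ G.edgeFinset := fun h => hc.subset_edgeFinset h
    simp only [hA, mem_filter]
    tauto
  -- `γ` is the disjoint union of `{e}`, its edges in `A` and its edges in `B`
  have hcardB : ∀ γ ∈ S, (B.filter (· ∈ γ)).card + 3 = γ.card := by
    intro γ hγ
    obtain ⟨hc, hm⟩ := (memS γ).1 hγ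
    have h2 := hcardA γ hγ
    have h3 : A.filter (· ∈ γ) = (γ.erase e).filter (ShareVertex e ·) := by
      ext e'
      have : e' ∈ γ → e' ∈ G.edgeFinset := fun h => hc.subset_edgeFinset h
      simp only [hA, mem_filter, mem_erase]
      tauto
    have h4 : B.filter (· ∈ γ) = (γ.erase e).filter (¬ ShareVertex e ·) := by
      ext e'
      have : e' ∈ γ → e' ∈ G.edgeFinset := fun h => hc.subset_edgeFinset h
      simp only [hB, mem_filter, mem_erase]
      tauto
    have h5 := Finset.card_filter_add_card_filter_not (s := γ.erase e) (ShareVertex e ·)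
    have h6 := Finset.card_erase_add_one hm
    rw [h3] at h2
    rw [h4]
    lia
  have hΓe : Gamma o G (allCycles G) e e = S.card := by
    rw [Gamma, if_pos rfl, ← Set.ncard_coe_finset]
    congr 1
    ext γ
    simp [hS]
  -- grouping the cycles through `e` by length
  have hR : ∑ n ∈ Finset.Icc 3 (Fintype.card V), (6 - (n : ℤ)) *
      (({γ : Finset (Sym2 V) | IsCycleEdgeSet G γ ∧ γ.card = n ∧ e ∈ γ}.ncard : ℤ))
      = ∑ γ ∈ S, (6 - (γ.card : ℤ)) := by
    rw [← Finset.sum_fiberwise_of_maps_to (s := S) (t := Finset.Icc 3 (Fintype.card V))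
      (g := Finset.card) fun γ hγ => ((memS γ).1 hγ).1.card_mem_Icc]
    refine Finset.sum_congr rfl fun n _ => ?_
    have h1 : {γ : Finset (Sym2 V) | IsCycleEdgeSet G γ ∧ γ.card = n ∧ e ∈ γ}
        = (S.filter (·.card = n) : Finset _) := by
      ext γ
      simp only [Set.mem_ofPred_eq, coe_filter, memS]
      tauto
    rw [h1, Set.ncard_coe_finset, Finset.sum_congr rfl
      (g := fun _ => 6 - (n : ℤ)) fun γ hγ => by rw [(mem_filter.1 hγ).2],
      Finset.sum_const, nsmul_eq_mul, mul_comm]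
  have hB' : ∑ γ ∈ S, ((B.filter (· ∈ γ)).card : ℤ) = ∑ γ ∈ S, ((γ.card : ℤ) - 3) :=
    Finset.sum_congr rfl fun γ hγ => by have := hcardB γ hγ; lia
  have hA' : ∑ γ ∈ S, ((A.filter (· ∈ γ)).card : ℤ) = ∑ γ ∈ S, (2 : ℤ) :=
    Finset.sum_congr rfl fun γ hγ => by rw [hcardA γ hγ]; rfl
  rw [hsumA, hsumB, hR, hΓe, Finset.sum_sub_distrib, hdouble, hdouble, hA', hB']
  simp only [Finset.sum_sub_distrib, Finset.sum_const, nsmul_eq_mul]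
  have : (A.card : ℤ) + 2 = G.degree u + G.degree v := by exact_mod_cast hAdeg
  linarith
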